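/- arXiv:1010.3305 — 4 statements merged into one kernel-verified Lean document; each statement's English description precedes it below -/
import Mathlib

section
/- Fix an integer k ≥ 2 and a real β with β ≥ √k. For each n ≥ 1, model the leaves of the depth-n rooted k-ary tree as functions from Fin n to Fin k with tree distance d(u,v) = 2(n − ℓ(u,v)), where ℓ(u,v) is the length of the longest common prefix, and let P(n) be the proportion of the total traffic that passes through the root, namely P(n) = ( Σ_{(u,v): d(u,v)=2n} β^{−d(u,v)} ) / ( Σ_{(u,v)} β^{−d(u,v)} ), both sums over ordered pairs of leaves. Then P(n) → 0 as n → ∞. -/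
open Filter

/-- The length of the longest common prefix of two leaves of the depth-`n`
rooted `k`-ary tree (leaves modeled as functions `Fin n → Fin k`):
the largest `j ≤ n` such that `u i = v i` for all `i < j`. -/
def prefLen {n k : ℕ} (u v : Fin n → Fin k) : ℕ :=
  Nat.findGreatest (fun j => ∀ i : Fin n, (i : ℕ) < j → u i = v i) n

/-- The tree distance between two leaves of the depth-`n` rooted `k`-ary tree:
`d(u,v) = 2 (n - ℓ(u,v))`. -/
def treeDist {n k : ℕ} (u v : Fin n → Fin k) : ℕ :=
  2 * (n - prefLen u v)

lemma aux_geom (k : ℕ) (hk : 2 ≤ k) (l : ℕ) :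
    ∑ j ∈ Finset.range l, k ^ (j + 1) ≤ 2 * k ^ l := by
  induction l with
  | zero => simp
  | succ l ih =>
    rw [Finset.sum_range_succ, pow_succ]
    nlinarith [Nat.mul_le_mul_left (k ^ l) hk]

lemma aux_prefLen_le {n k : ℕ} (u v : Fin n → Fin k) : prefLen u v ≤ n :=
  Nat.findGreatest_le n

lemma aux_card {n k : ℕ} (u : Fin n → Fin k) (j : ℕ) (hj : j ≤ n) :
    k ^ j * (Finset.univ.filter (fun v : Fin n → Fin k => j ≤ prefLen u v)).card ≥ k ^ n := by
  classical
  have hsub : Fintype.piFinset (fun i : Fin n => if (i : ℕ) < j then {u i} else Finset.univ) ⊆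
      Finset.univ.filter (fun v : Fin n → Fin k => j ≤ prefLen u v) := by
    intro v hv
    rw [Fintype.mem_piFinset] at hv
    simp only [Finset.mem_filter, Finset.mem_univ, true_and]
    refine Nat.le_findGreatest hj ?_
    intro i hi
    have := hv i
    simp only [hi, if_true, Finset.mem_singleton] at this
    exact this.symm
  have h1 := Finset.card_le_card hsub
  rw [Fintype.card_piFinset] at h1
  have h2 : k ^ j = ∏ i : Fin n, (if (i : ℕ) < j then k else 1) := by
    rw [Fin.prod_univ_eq_prod_range (fun i => if i < j then k else 1) n, Finset.prod_ite]
    have : (Finset.range n).filter (fun i => i < j) = Finset.range j := by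
      ext i; simp; omega
    simp [this]
  refine le_trans ?_ (Nat.mul_le_mul_left _ h1)
  rw [h2, ← Finset.prod_mul_distrib]
  have h3 : ∀ i : Fin n, (if (i : ℕ) < j then k else 1) *
      (if (i : ℕ) < j then ({u i} : Finset (Fin k)) else Finset.univ).card = k := by
    intro i
    split_ifs <;> simp
  rw [Finset.prod_congr rfl (fun i _ => h3 i)]
  simp

lemma aux_sum {n k : ℕ} (hk : 2 ≤ k) (u : Fin n → Fin k) :
    n * k ^ n ≤ 2 * ∑ v : Fin n → Fin k, k ^ prefLen u v := by
  have h1 : ∀ v : Fin n → Fin k,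
      ∑ j ∈ Finset.range n, (if j + 1 ≤ prefLen u v then k ^ (j + 1) else 0)
        ≤ 2 * k ^ prefLen u v := by
    intro v
    refine le_trans (le_of_eq ?_) (aux_geom k hk (prefLen u v))
    rw [← Finset.sum_filter]
    congr 1
    have := aux_prefLen_le u v
    ext i; simp; omega
  rw [Finset.mul_sum]
  refine le_trans ?_ (Finset.sum_le_sum (fun v _ => h1 v))
  rw [Finset.sum_comm]
  have h2 : ∀ j ∈ Finset.range n, k ^ n ≤
      ∑ v : Fin n → Fin k, (if j + 1 ≤ prefLen u v then k ^ (j + 1) else 0) := by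
    intro j hj
    rw [← Finset.sum_filter, Finset.sum_const, smul_eq_mul, mul_comm]
    exact aux_card u (j + 1) (by simpa using hj)
  simpa using Finset.sum_le_sum h2

theorem root_traffic_proportion_tendsto_zero (k : ℕ) (hk : 2 ≤ k)
    (β : ℝ) (hβ : Real.sqrt k ≤ β) :
    Tendsto
      (fun n : ℕ =>
        (∑ u : Fin n → Fin k, ∑ v : Fin n → Fin k,
            if treeDist u v = 2 * n then β ^ (-(treeDist u v : ℤ)) else 0) /
        (∑ u : Fin n → Fin k, ∑ v : Fin n → Fin k, β ^ (-(treeDist u v : ℤ))))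
      atTop (nhds 0) := by
  have hk0 : (0 : ℝ) < k := by positivity
  have hβ0 : 0 < β := lt_of_lt_of_le (Real.sqrt_pos.2 hk0) hβ
  have hkβ : (k : ℝ) ≤ β ^ 2 := by
    rw [← Real.sq_sqrt hk0.le]
    exact pow_le_pow_left₀ (Real.sqrt_nonneg _) hβ 2
  have hlim : Tendsto (fun n : ℕ => (2 : ℝ) / n) atTop (nhds 0) :=
    tendsto_const_div_atTop_nhds_zero_nat 2
  refine tendsto_of_tendsto_of_tendsto_of_le_of_le' tendsto_const_nhds hlim
    (Eventually.of_forall fun n => ?_) ((eventually_gt_atTop 0).mono fun n hn => ?_)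
  · refine div_nonneg ?_ ?_
    · refine Finset.sum_nonneg fun u _ => Finset.sum_nonneg fun v _ => ?_
      split_ifs <;> positivity
    · exact Finset.sum_nonneg fun u _ => Finset.sum_nonneg fun v _ => by positivity
  · set x : ℝ := β ^ (-(2 * n : ℤ)) with hx
    have hx0 : 0 < x := by positivity
    have hn0 : (0 : ℝ) < n := by exact_mod_cast hn
    have hnum : (∑ u : Fin n → Fin k, ∑ v : Fin n → Fin k,
            if treeDist u v = 2 * n then β ^ (-(treeDist u v : ℤ)) else 0)
          ≤ ((k : ℝ) ^ n) * ((k : ℝ) ^ n * x) := by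
      calc _ ≤ ∑ u : Fin n → Fin k, ∑ v : Fin n → Fin k, x := by
            refine Finset.sum_le_sum fun u _ => Finset.sum_le_sum fun v _ => ?_
            split_ifs with h
            · rw [h, hx]; push_cast; exact le_rfl
            · exact hx0.le
        _ = _ := by simp
    have hterm : ∀ u v : Fin n → Fin k,
        x * (k : ℝ) ^ prefLen u v ≤ β ^ (-(treeDist u v : ℤ)) := by
      intro u v
      have hl := aux_prefLen_le u v
      have : β ^ (-(treeDist u v : ℤ)) = x * (β ^ 2) ^ prefLen u v := by
        rw [hx, ← pow_mul, ← zpow_natCast β (2 * _), ← zpow_add₀ hβ0.ne']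
        congr 1
        unfold treeDist
        push_cast [Nat.cast_sub hl]
        ring
      rw [this]
      gcongr
    have hden : (k : ℝ) ^ n * (x * (n * (k : ℝ) ^ n / 2)) ≤
        ∑ u : Fin n → Fin k, ∑ v : Fin n → Fin k, β ^ (-(treeDist u v : ℤ)) := by
      calc _ = ∑ u : Fin n → Fin k, x * (n * (k : ℝ) ^ n / 2) := by simp
        _ ≤ _ := by
          refine Finset.sum_le_sum fun u _ => ?_
          refine le_trans ?_ (Finset.sum_le_sum fun v _ => hterm u v)
          rw [← Finset.mul_sum]
          have h : ((n * k ^ n : ℕ) : ℝ) ≤ ((2 * ∑ v : Fin n → Fin k, k ^ prefLen u v : ℕ) : ℝ) :=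
            Nat.cast_le.2 (aux_sum hk u)
          push_cast at h
          refine mul_le_mul_of_nonneg_left ?_ hx0.le
          linarith
    have hD : 0 < (k : ℝ) ^ n * (x * (n * (k : ℝ) ^ n / 2)) := by positivity
    rw [div_le_div_iff₀ (lt_of_lt_of_le hD hden) hn0]
    calc _ ≤ ((k : ℝ) ^ n) * ((k : ℝ) ^ n * x) * n := by gcongr
      _ = 2 * ((k : ℝ) ^ n * (x * (n * (k : ℝ) ^ n / 2))) := by ring
      _ ≤ _ := by gcongr
end

section
/- Fix an integer k ≥ 2 and a real β with 1 < β < √k. For each n ≥ 1, model the leaves of the depth-n rooted k-ary tree as functions from Fin n to Fin k with tree distance d(u,v) = 2(n − ℓ(u,v)), where ℓ(u,v) is the length of the longest common prefix, and let P(n) be the proportion of the total traffic that passes through the root, namely P(n) = ( Σ_{(u,v): d(u,v)=2n} β^{−d(u,v)} ) / ( Σ_{(u,v)} β^{−d(u,v)} ), both sums over ordered pairs of leaves. Then P(n) → 1 − β²/k as n → ∞. -/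
open Filter

lemma prefLen_cons_ne {n k : ℕ} (a b : Fin k) (u v : Fin n → Fin k) (h : a ≠ b) :
    prefLen (Fin.cons a u : Fin (n+1) → Fin k) (Fin.cons b v) = 0 := by
  unfold prefLen
  rw [Nat.findGreatest_eq_zero_iff]
  intro m hm _ H
  exact h (by simpa using H 0 (by simpa using hm))

lemma prefLen_cons_eq {n k : ℕ} (a : Fin k) (u v : Fin n → Fin k) :
    prefLen (Fin.cons a u : Fin (n+1) → Fin k) (Fin.cons a v) = prefLen u v + 1 := by
  have key : ∀ j, (∀ i : Fin (n+1), (i : ℕ) < j + 1 →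
      (Fin.cons a u : Fin (n+1) → Fin k) i = (Fin.cons a v : Fin (n+1) → Fin k) i) ↔
      (∀ i : Fin n, (i : ℕ) < j → u i = v i) := by
    intro j
    rw [Fin.forall_fin_succ]
    simp
  have hs : ∀ i : Fin n, (i : ℕ) < prefLen u v → u i = v i :=
    Nat.findGreatest_spec (P := fun j => ∀ i : Fin n, (i : ℕ) < j → u i = v i)
      (Nat.zero_le n) (by simp)
  have hle : prefLen u v ≤ n := Nat.findGreatest_le n
  conv_lhs => unfold prefLen
  rw [Nat.findGreatest_eq_iff]
  refine ⟨by omega, fun _ => (key _).2 hs, ?_⟩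
  intro m hm hmn H
  obtain ⟨j, rfl⟩ : ∃ j, m = j + 1 := ⟨m - 1, by omega⟩
  have : j ≤ prefLen u v := Nat.le_findGreatest (by omega) ((key j).1 H)
  omega

lemma treeDist_cons {n k : ℕ} (a b : Fin k) (u v : Fin n → Fin k) :
    treeDist (Fin.cons a u : Fin (n+1) → Fin k) (Fin.cons b v) =
      if a = b then treeDist u v else 2 * (n + 1) := by
  split_ifs with h
  · subst h
    simp [treeDist, prefLen_cons_eq]
  · simp [treeDist, prefLen_cons_ne a b u v h]

lemma sum_cons {n k : ℕ} (g : (Fin (n+1) → Fin k) → ℝ) :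
    ∑ u, g u = ∑ a : Fin k, ∑ u : Fin n → Fin k, g (Fin.cons a u) := by
  rw [← Fintype.sum_prod_type']
  exact (Fintype.sum_equiv (Fin.consEquiv (fun _ => Fin k)) _ _ (fun _ => rfl)).symm

lemma S_succ (n k : ℕ) (f : ℕ → ℝ) :
    ∑ u : Fin (n+1) → Fin k, ∑ v : Fin (n+1) → Fin k, f (treeDist u v) =
      k * (∑ u : Fin n → Fin k, ∑ v : Fin n → Fin k, f (treeDist u v)) +
      k * (k - 1) * (k ^ n * k ^ n) * f (2 * (n + 1)) := by
  have h1 : ∀ a b : Fin k, (∑ u : Fin n → Fin k, ∑ v : Fin n → Fin k,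
      f (treeDist (Fin.cons a u : Fin (n+1) → Fin k) (Fin.cons b v))) =
      (k ^ n * k ^ n) * f (2 * (n + 1)) + if a = b then
        (∑ u : Fin n → Fin k, ∑ v : Fin n → Fin k, f (treeDist u v))
         - (k ^ n * k ^ n) * f (2 * (n + 1)) else 0 := by
    intro a b
    simp only [treeDist_cons]
    split_ifs with h
    · ring
    · simp [mul_assoc]
  rw [sum_cons]
  simp only [sum_cons (n := n)]
  have h2 : ∀ a : Fin k, (∑ u : Fin n → Fin k, ∑ b : Fin k, ∑ v : Fin n → Fin k,
      f (treeDist (Fin.cons a u : Fin (n+1) → Fin k) (Fin.cons b v))) =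
      ∑ b : Fin k, ∑ u : Fin n → Fin k, ∑ v : Fin n → Fin k,
      f (treeDist (Fin.cons a u : Fin (n+1) → Fin k) (Fin.cons b v)) :=
    fun a => Finset.sum_comm
  simp only [h2, h1, Finset.sum_add_distrib, Finset.sum_ite_eq, Finset.mem_univ, if_true,
    Finset.sum_const, Finset.card_univ, Fintype.card_fin, nsmul_eq_mul]
  ring

lemma num_succ (n k : ℕ) (β : ℝ) :
    (∑ u : Fin (n+1) → Fin k, ∑ v : Fin (n+1) → Fin k,
      if treeDist u v = 2 * (n+1) then β ^ (-(treeDist u v : ℤ)) else 0) =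
      k * (k - 1) * (k ^ n * k ^ n) * ((β ^ 2)⁻¹) ^ (n + 1) := by
  rw [S_succ n k (fun d => if d = 2 * (n+1) then β ^ (-(d : ℤ)) else 0)]
  have : ∀ u v : Fin n → Fin k, treeDist u v ≠ 2 * (n + 1) := by
    intro u v
    unfold treeDist
    omega
  simp only [this, if_false, if_true, Finset.sum_const_zero, mul_zero, zero_add]
  rw [zpow_neg, zpow_natCast, pow_mul, inv_pow]

lemma den_eq (k : ℕ) (β r : ℝ) (hr : r = k * (β ^ 2)⁻¹) (hr1 : r ≠ 1) (n : ℕ) :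
    (∑ u : Fin n → Fin k, ∑ v : Fin n → Fin k, β ^ (-(treeDist u v : ℤ))) =
      k ^ n * (1 + (k - 1) * (β ^ 2)⁻¹ * ((r ^ n - 1) / (r - 1))) := by
  induction n with
  | zero => simp [treeDist]
  | succ n ih =>
    rw [S_succ n k (fun d => β ^ (-(d : ℤ))), ih, zpow_neg, zpow_natCast, pow_mul, ← inv_pow]
    have h : (r ^ (n+1) - 1) / (r - 1) = (r ^ n - 1) / (r - 1) + r ^ n := by
      have := sub_ne_zero.2 hr1
      field_simp
      ring
    rw [h]
    have : r ^ n = k ^ n * ((β ^ 2)⁻¹) ^ n := by rw [hr, mul_pow]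
    generalize (r ^ n - 1) / (r - 1) = X
    rw [this]
    ring

theorem root_traffic_proportion_tendsto_global (k : ℕ) (hk : 2 ≤ k)
    (β : ℝ) (hβ1 : 1 < β) (hβ2 : β < Real.sqrt k) :
    Tendsto
      (fun n : ℕ =>
        (∑ u : Fin n → Fin k, ∑ v : Fin n → Fin k,
            if treeDist u v = 2 * n then β ^ (-(treeDist u v : ℤ)) else 0) /
        (∑ u : Fin n → Fin k, ∑ v : Fin n → Fin k, β ^ (-(treeDist u v : ℤ))))
      atTop (nhds (1 - β ^ 2 / (k : ℝ))) := by
  have hk0 : (2:ℝ) ≤ k := by exact_mod_cast hk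
  have hb : 0 < β ^ 2 := by positivity
  have hbk : β ^ 2 < k := (Real.lt_sqrt (by linarith)).1 hβ2
  obtain ⟨r, hr⟩ : ∃ r : ℝ, r = k * (β ^ 2)⁻¹ := ⟨_, rfl⟩
  have hr1 : 1 < r := by
    rw [hr, ← div_eq_mul_inv, lt_div_iff₀ hb]
    linarith
  obtain ⟨c, hc⟩ : ∃ c : ℝ, c = (k - 1) * (β ^ 2)⁻¹ := ⟨_, rfl⟩
  have hc0 : 0 < c := by
    rw [hc]
    have : (0:ℝ) < k - 1 := by linarith
    positivity
  have hrs : 0 < r - 1 := by linarith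
  have hr0 : 0 < r := by linarith
  rw [← tendsto_add_atTop_iff_nat 1]
  have hlim : Tendsto (fun n : ℕ => c / ((r⁻¹) ^ n * (1 - c / (r - 1)) + c * r / (r - 1))) atTop
      (nhds (1 - β ^ 2 / (k : ℝ))) := by
    have h0 : Tendsto (fun n : ℕ => (r⁻¹) ^ n) atTop (nhds 0) :=
      tendsto_pow_atTop_nhds_zero_of_lt_one (by positivity) (inv_lt_one_of_one_lt₀ hr1)
    have h1 := (tendsto_const_nhds (x := c)).div
      ((h0.mul_const (1 - c / (r - 1))).add_const (c * r / (r - 1))) (by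
        rw [zero_mul, zero_add]
        positivity)
    suffices e : 1 - β ^ 2 / (k : ℝ) = c / (0 * (1 - c / (r - 1)) + c * r / (r - 1)) by
      rw [e]
      exact h1
    have : β ^ 2 / (k : ℝ) = r⁻¹ := by
      rw [hr, mul_inv, inv_inv]
      ring
    rw [this]
    field_simp
    ring
  refine hlim.congr fun n => ?_
  rw [num_succ, den_eq k β r hr hr1.ne', ← hc]
  have hnum : (k:ℝ) * (k - 1) * (k ^ n * k ^ n) * ((β ^ 2)⁻¹) ^ (n + 1)
      = k ^ (n + 1) * (r ^ n * c) := by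
    rw [hc, hr, mul_pow]
    ring
  have hkn : (k:ℝ) ^ (n+1) ≠ 0 := by positivity
  have hrn : r ^ n ≠ 0 := by positivity
  rw [hnum, mul_div_mul_left _ _ hkn, ← mul_div_mul_left c _ hrn]
  congr 1
  rw [inv_pow]
  field_simp
  ring
end

section
/- Let (Y, d) be a metric space equipped with a Borel measure ν, and let K > 0, C > 0, D > 0, a > 1 and r₀ > 0 be constants such that ν(B(x,r)) ≥ K^{−1}·r^D for every x ∈ Y and every r with 0 < r ≤ r₀ (lower Ahlfors regularity), and such that ν has no atoms. Let h : Y × Y → ℕ be a function satisfying d(x,y) ≥ C^{−1}·a^{−h(x,y)} for all x ≠ y in Y. If β > 1 and β² > a^D, then for every x ∈ Y the integral ∫_Y β^{2·h(x,y)} dν(y) is infinite. -/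
open MeasureTheory

theorem integral_infinite_of_supercritical
    {Y : Type*} [MetricSpace Y] [MeasurableSpace Y] [BorelSpace Y]
    (ν : Measure Y) (K C D a r₀ : ℝ)
    (hK : 0 < K) (hC : 0 < C) (hD : 0 < D) (ha : 1 < a) (hr₀ : 0 < r₀)
    (hAhlfors : ∀ x : Y, ∀ r : ℝ, 0 < r → r ≤ r₀ →
      ENNReal.ofReal (K⁻¹ * r ^ D) ≤ ν (Metric.closedBall x r))
    (hNoAtoms : ∀ x : Y, ν {x} = 0)
    (h : Y → Y → ℕ)
    (hh : ∀ x y : Y, x ≠ y → C⁻¹ * a ^ (-(h x y : ℤ)) ≤ dist x y)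
    (β : ℝ) (hβ : 1 < β) (hβa : a ^ D < β ^ 2) :
    ∀ x : Y, ∫⁻ y, ENNReal.ofReal (β ^ (2 * h x y)) ∂ν = ⊤ := by
  intro x
  have ha0 : 0 < a := by linarith
  have haD : 0 < a ^ D := Real.rpow_pos_of_pos ha0 D
  have key : ∀ m : ℕ, C⁻¹ * (a ^ m)⁻¹ ≤ r₀ →
      ENNReal.ofReal ((K⁻¹ * (C⁻¹) ^ D) * (β ^ 2 / a ^ D) ^ m) ≤
        ∫⁻ y, ENNReal.ofReal (β ^ (2 * h x y)) ∂ν := by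
    intro m hm
    have ham : 0 < a ^ m := pow_pos ha0 m
    have hr : 0 < C⁻¹ * (a ^ m)⁻¹ := by positivity
    have h1 := hAhlfors x _ hr hm
    have h2 : ν (Metric.closedBall x (C⁻¹ * (a ^ m)⁻¹) \ {x}) =
        ν (Metric.closedBall x (C⁻¹ * (a ^ m)⁻¹)) := measure_sdiff_null (hNoAtoms x)
    have hS : MeasurableSet (Metric.closedBall x (C⁻¹ * (a ^ m)⁻¹) \ {x}) :=
      Metric.isClosed_closedBall.measurableSet.diff (measurableSet_singleton x)
    have h3 : (C⁻¹ * (a ^ m)⁻¹) ^ D = C⁻¹ ^ D * ((a ^ D) ^ m)⁻¹ := by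
      rw [Real.mul_rpow (by positivity) (by positivity), Real.inv_rpow ham.le,
        ← Real.rpow_natCast, ← Real.rpow_natCast, ← Real.rpow_mul ha0.le, ← Real.rpow_mul ha0.le,
        mul_comm (m : ℝ) D]
    calc ENNReal.ofReal ((K⁻¹ * (C⁻¹) ^ D) * (β ^ 2 / a ^ D) ^ m)
        = ENNReal.ofReal (β ^ (2 * m)) * ENNReal.ofReal (K⁻¹ * (C⁻¹ * (a ^ m)⁻¹) ^ D) := by
          rw [← ENNReal.ofReal_mul (by positivity), h3, div_pow, pow_mul]
          congr 1
          ring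
      _ ≤ ENNReal.ofReal (β ^ (2 * m)) *
            ν (Metric.closedBall x (C⁻¹ * (a ^ m)⁻¹) \ {x}) := by
          rw [h2]; gcongr
      _ = ∫⁻ y, (Metric.closedBall x (C⁻¹ * (a ^ m)⁻¹) \ {x}).indicator
            (fun _ => ENNReal.ofReal (β ^ (2 * m))) y ∂ν := by
          rw [lintegral_indicator_const hS]
      _ ≤ _ := by
          apply lintegral_mono
          intro y
          apply Set.indicator_apply_le
          rintro ⟨hy, hyx⟩
          apply ENNReal.ofReal_le_ofReal
          apply pow_le_pow_right₀ hβ.le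
          have hne : x ≠ y := fun e => hyx e.symm
          have h4 := hh x y hne
          rw [Metric.mem_closedBall, dist_comm] at hy
          have h5 := le_of_mul_le_mul_left (h4.trans hy) (inv_pos.2 hC)
          rw [zpow_neg, zpow_natCast, inv_le_inv₀ (pow_pos ha0 _) ham] at h5
          have := (pow_le_pow_iff_right₀ ha).1 h5
          omega
  have hq : 1 < β ^ 2 / a ^ D := (one_lt_div haD).2 hβa
  have hc : 0 < K⁻¹ * (C⁻¹) ^ D := mul_pos (inv_pos.2 hK) (Real.rpow_pos_of_pos (inv_pos.2 hC) D)
  have t1 : Filter.Tendsto (fun m : ℕ => ENNReal.ofReal ((K⁻¹ * (C⁻¹) ^ D) * (β ^ 2 / a ^ D) ^ m))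
      Filter.atTop (nhds ⊤) :=
    ENNReal.tendsto_ofReal_atTop.comp
      ((tendsto_pow_atTop_atTop_of_one_lt hq).const_mul_atTop hc)
  have t2 : Filter.Tendsto (fun m : ℕ => C⁻¹ * (a ^ m)⁻¹) Filter.atTop (nhds 0) := by
    simpa using ((tendsto_pow_atTop_atTop_of_one_lt ha).inv_tendsto_atTop).const_mul C⁻¹
  refine top_le_iff.1 (le_of_tendsto t1 ?_)
  filter_upwards [t2.eventually (eventually_le_nhds hr₀)] with m hm
  exact key m hm
end

section
/- Fix an integer k ≥ 2 and a real β with 1 < β and β² ≠ k. For each n ≥ 1 set P(n) = ( (k−1)·k^{n−1}·β^{−2n} ) / ( 1 + (β^{−2})·(k−1)·((k·β^{−2})^n − 1)/((k·β^{−2}) − 1) ). Then: if β ≥ √k (interpreting the denominator sum as 1 + n(k−1)/k when β² = k), lim_{n→∞} P(n) = 0; and if 1 < β < √k, lim_{n→∞} P(n) = 1 − β²/k. -/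
open Filter

/-- The closed-form proportion of traffic through the root of the depth-`n`
`k`-ary tree with traffic rate `β^{-p}` at tree distance `p`; when `β² = k`
the denominator sum is interpreted as `1 + n (k-1)/k`. -/
noncomputable def rootProportion (k : ℕ) (β : ℝ) (n : ℕ) : ℝ :=
  (((k : ℝ) - 1) * (k : ℝ) ^ (n - 1) * β ^ (-(2 * (n : ℤ)))) /
    (if β ^ 2 = (k : ℝ) then 1 + (n : ℝ) * ((k : ℝ) - 1) / (k : ℝ)
     else 1 + β ^ (-2 : ℤ) * ((k : ℝ) - 1) *
        (((k : ℝ) * β ^ (-2 : ℤ)) ^ n - 1) / ((k : ℝ) * β ^ (-2 : ℤ) - 1))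

lemma rootProportion_num (k : ℕ) (hk : 2 ≤ k) (β : ℝ) (n : ℕ) (hn : 1 ≤ n) :
    ((k : ℝ) - 1) * (k : ℝ) ^ (n - 1) * β ^ (-(2 * (n : ℤ)))
      = ((k : ℝ) - 1) / k * ((k : ℝ) * β ^ (-2 : ℤ)) ^ n := by
  have hk0 : (k : ℝ) ≠ 0 := by positivity
  obtain ⟨m, rfl⟩ : ∃ m, n = m + 1 := ⟨n - 1, by omega⟩
  have h : β ^ (-(2 * ((m + 1 : ℕ) : ℤ))) = (β ^ (-2 : ℤ)) ^ (m + 1) := by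
    rw [← zpow_natCast, ← zpow_mul]
    congr 1
  rw [h, mul_pow, Nat.add_sub_cancel, pow_succ (k : ℝ) m]
  field_simp

theorem rootProportion_limits (k : ℕ) (hk : 2 ≤ k) (β : ℝ) (hβ : 1 < β) :
    (Real.sqrt k ≤ β →
      Tendsto (rootProportion k β) atTop (nhds 0)) ∧
    (β < Real.sqrt k →
      Tendsto (rootProportion k β) atTop (nhds (1 - β ^ 2 / (k : ℝ)))) := by
  have hk2 : (2 : ℝ) ≤ k := by exact_mod_cast hk
  have hk0 : (0 : ℝ) < k := by linarith
  have hβ0 : 0 < β := by linarith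
  have hb : β ^ (-2 : ℤ) = (β ^ 2)⁻¹ := by rw [zpow_neg]; norm_cast
  have hB : 0 < β ^ 2 := by positivity
  obtain ⟨x, hx⟩ : ∃ x, x = (k : ℝ) * β ^ (-2 : ℤ) := ⟨_, rfl⟩
  have hxd : x = k / β ^ 2 := by rw [hx, hb]; rfl
  obtain ⟨c, hc⟩ : ∃ c, c = ((k : ℝ) - 1) / k := ⟨_, rfl⟩
  have hc0 : 0 < c := by rw [hc]; apply div_pos <;> linarith
  have hx0 : 0 < x := by rw [hxd]; positivity
  have hcx : β ^ (-2 : ℤ) * ((k : ℝ) - 1) = c * x := by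
    rw [hc, hx]; field_simp
  constructor
  · intro h
    have h2 : (k : ℝ) ≤ β ^ 2 := (Real.sqrt_le_left hβ0.le).1 h
    rcases h2.eq_or_lt with he | hl
    · have hx1 : x = 1 := by rw [hxd, ← he]; field_simp
      have key : Tendsto (fun n : ℕ => c / (1 + (n : ℝ) * c)) atTop (nhds 0) := by
        apply Tendsto.div_atTop tendsto_const_nhds
        exact tendsto_atTop_add_const_left _ _
          (tendsto_natCast_atTop_atTop.atTop_mul_const hc0)
      refine key.congr' ?_
      filter_upwards [eventually_ge_atTop 1] with n hn
      rw [rootProportion, rootProportion_num k hk β n hn, if_pos he.symm, ← hx, hx1, ← hc,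
        one_pow, mul_one, mul_div_assoc, ← hc]
    · have hx1 : x < 1 := by rw [hxd, div_lt_one hB]; exact hl
      have hp := tendsto_pow_atTop_nhds_zero_of_lt_one hx0.le hx1
      have hd : 1 + c * x * (0 - 1) / (x - 1) ≠ 0 := by
        have : c * x * (0 - 1) / (x - 1) = c * x / (1 - x) := by
          rw [← neg_div_neg_eq]; congr 1 <;> ring
        rw [this]
        have : 0 < 1 - x := by linarith
        positivity
      have key := (hp.const_mul c).div
        ((((hp.sub_const 1).const_mul (c * x)).div_const (x - 1)).const_add 1) hd
      rw [mul_zero, zero_div] at key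
      refine key.congr' ?_
      filter_upwards [eventually_ge_atTop 1] with n hn
      rw [rootProportion, rootProportion_num k hk β n hn, if_neg hl.ne', ← hx, hcx, ← hc]
      rfl
  · intro h
    have hl : β ^ 2 < k := (Real.lt_sqrt hβ0.le).1 h
    have hx1 : 1 < x := by rw [hxd, one_lt_div hB]; exact hl
    have hx1' : 0 < x - 1 := by linarith
    have hp := tendsto_pow_atTop_nhds_zero_of_lt_one (inv_pos.2 hx0).le (inv_lt_one_of_one_lt₀ hx1)
    have hd : 0 + c * x * (1 - 0) / (x - 1) ≠ 0 := by
      rw [zero_add, sub_zero]; positivity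
    have key := (tendsto_const_nhds (x := c)).div
      (hp.add (((hp.const_sub 1).const_mul (c * x)).div_const (x - 1))) hd
    have hlim : c / (0 + c * x * (1 - 0) / (x - 1)) = 1 - β ^ 2 / k := by
      have : β ^ 2 / k = x⁻¹ := by rw [hxd, inv_div]
      rw [this]
      field_simp
      ring
    rw [hlim] at key
    refine key.congr' ?_
    filter_upwards [eventually_ge_atTop 1] with n hn
    rw [rootProportion, rootProportion_num k hk β n hn, if_neg hl.ne, ← hx, hcx, ← hc]
    have hxn : 0 < x ^ n := by positivity
    have e : 1 + c * x * (x ^ n - 1) / (x - 1)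
        = x ^ n * (x⁻¹ ^ n + c * x * (1 - x⁻¹ ^ n) / (x - 1)) := by
      rw [inv_pow]
      field_simp
    rw [e, mul_comm c (x ^ n), mul_div_mul_left _ _ hxn.ne']
    rfl
end
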